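/- There exists a sequence (U_k)_{k≥1} where each U_k is a cofinite ultrafilter on FIN_k, such that for all 0 < j ≤ k and every nondecreasing surjection f : {0,1,…,k} → {0,1,…,j}, one has U_k + U_j = U_j + U_k = U_k and f(U_k) = U_j. -/

import Mathlib

/-!
The sum of ultrafilters is Mathlib's `Ultrafilter.add` (the iterated-quantifier convolution), for
which `U ↦ U + V` is continuous. On cofinite ultrafilters concentrated on finitely supported
functions it agrees with `memSum` (`memSum_iff`), and there `b ↦ f ∘ b` is additive
(`map_add_eq`).

Call a sequence `(V_k)` of cofinite ultrafilters on `FIN k` *coherent* if `f(V_k) = V_j` for every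
nondecreasing surjection `f : {0,…,k} → {0,…,j}`. Coherent sequences form a compact subsemigroup
of the product space, so each nonempty closed subsemigroup of it contains idempotents.

* Coherent sequences exist (`exists_coherent`). Fix a nonprincipal ultrafilter `p` on `ℕ`, and let
  `V_k` be the image of the tensor power of `p` under the map sending `x₁ < … < x_{k+1}` to the
  staircase with value `i` on `[x_i, x_{i+1})` and `0` elsewhere. Composing with `f` merges
  consecutive steps, that is, forgets some of the `x_i`, so it sends `V_k` to `V_j`.
* If `V` is coherent and idempotent, then the sequences `V_0 + ⋯ + V_k` and `V_k + ⋯ + V_0` are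
  coherent: `f` sends the first to `V_{f 0} + ⋯ + V_{f k}`, in which equal neighbours coalesce,
  and similarly for the second.
* The absorption identities are obtained level by level (`good_step`). Suppose `V` is coherent and
  absorption holds up to level `n`. Among coherent sequences agreeing with `V` up to `n`, take an
  idempotent one; its right sums `V_k + ⋯ + V_0` still agree with `V` up to `n` and satisfy
  `W_{n+1} + V_n = W_{n+1}`. This last condition is closed, so there is an idempotent such `W`,
  and its left sums `W_0 + ⋯ + W_k` satisfy absorption up to level `n + 1`.

The diagonal of the sequences produced by iterating `good_step` is the required one.
-/

open Filter

/-- `FIN k`: finitely supported functions `ℕ → {0,…,k}` attaining the maximum value `k`. -/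
def FIN (k : ℕ) : Set (ℕ → ℕ) :=
  {b | (∀ n, b n ≤ k) ∧ {n | b n ≠ 0}.Finite ∧ ∃ n, b n = k}

/-- `Supp b < Supp b'`. -/
def SuppLT (b b' : ℕ → ℕ) : Prop :=
  ∀ m, b m ≠ 0 → ∀ m', b' m' ≠ 0 → m < m'

/-- `f` is (the extension to `ℕ` of) a nondecreasing surjection `{0,…,k} → {0,…,j}`. -/
def IsTetrisFn (k j : ℕ) (f : ℕ → ℕ) : Prop :=
  (∀ i i', i' ≤ i → i ≤ k → f i' ≤ f i) ∧ (∀ i, i ≤ k → f i ≤ j) ∧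
    ∀ m, m ≤ j → ∃ i, i ≤ k ∧ f i = m

/-- An ultrafilter is cofinite if for every `n` the set of `b` with `b n = 0` belongs
to it. -/
def IsCofinite (U : Ultrafilter (ℕ → ℕ)) : Prop := ∀ n, {b : ℕ → ℕ | b n = 0} ∈ U

/-- `A ∈ U + V`: for `U`-almost all `b`, for `V`-almost all `b'`,
`Supp b < Supp b'` and `b + b' ∈ A`. -/
def memSum (U V : Ultrafilter (ℕ → ℕ)) (A : Set (ℕ → ℕ)) : Prop :=
  ∀ᶠ b in (U : Filter (ℕ → ℕ)), ∀ᶠ b' in (V : Filter (ℕ → ℕ)),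
    SuppLT b b' ∧ b + b' ∈ A

/-- The generalized tetris operation `b ↦ f ∘ b`. -/
def tetrisMap (f : ℕ → ℕ) : (ℕ → ℕ) → ℕ → ℕ := fun b => f ∘ b

attribute [local instance] Ultrafilter.addSemigroup

/-! ### Sums of cofinite ultrafilters -/

/-- `U` is a cofinite ultrafilter on `FIN k`. -/
def IsFC (k : ℕ) (U : Ultrafilter (ℕ → ℕ)) : Prop := FIN k ∈ U ∧ IsCofinite U

theorem ult_mem_add {U V : Ultrafilter (ℕ → ℕ)} {A : Set (ℕ → ℕ)} :
    A ∈ U + V ↔ ∀ᶠ b in (U : Filter (ℕ → ℕ)), ∀ᶠ b' in (V : Filter (ℕ → ℕ)), b + b' ∈ A :=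
  Iff.rfl

theorem SuppLT.eq_zero_or {b b' : ℕ → ℕ} (h : SuppLT b b') (t : ℕ) : b t = 0 ∨ b' t = 0 := by
  by_contra hc
  push Not at hc
  exact lt_irrefl _ (h t hc.1 t hc.2)

theorem IsCofinite.eventually_le {U : Ultrafilter (ℕ → ℕ)} (hU : IsCofinite U) (N : ℕ) :
    ∀ᶠ b in (U : Filter (ℕ → ℕ)), ∀ t ≤ N, b t = 0 := by
  have h := (Filter.eventually_all_finite (l := (U : Filter (ℕ → ℕ)))
    (p := fun t b => b t = 0) (Set.finite_Iic N)).2 (fun t _ => hU t)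
  exact h

theorem IsCofinite.eventually_suppLT {V : Ultrafilter (ℕ → ℕ)} (hV : IsCofinite V) {k : ℕ}
    {b : ℕ → ℕ} (hb : b ∈ FIN k) : ∀ᶠ b' in (V : Filter (ℕ → ℕ)), SuppLT b b' := by
  obtain ⟨N, hN⟩ := hb.2.1.bddAbove
  filter_upwards [hV.eventually_le N] with b' hb' m hm m' hm'
  have h1 : m ≤ N := hN hm
  by_contra hc
  exact hm' (hb' m' (by omega))

/-- In a sum of cofinite ultrafilters, only pairs with `Supp b < Supp b'` matter. -/
theorem eventually_pair_congr {U V : Ultrafilter (ℕ → ℕ)} {j k : ℕ} (hU : IsFC j U)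
    (hV : IsFC k V) {P Q : (ℕ → ℕ) → (ℕ → ℕ) → Prop}
    (h : ∀ b ∈ FIN j, ∀ b' ∈ FIN k, SuppLT b b' → (P b b' ↔ Q b b')) :
    (∀ᶠ b in (U : Filter (ℕ → ℕ)), ∀ᶠ b' in (V : Filter (ℕ → ℕ)), P b b') ↔
      ∀ᶠ b in (U : Filter (ℕ → ℕ)), ∀ᶠ b' in (V : Filter (ℕ → ℕ)), Q b b' := by
  refine eventually_congr ?_
  filter_upwards [hU.1] with b hb
  refine eventually_congr ?_
  filter_upwards [hV.1, hV.2.eventually_suppLT hb] with b' hb' hs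
  exact h b hb b' hb' hs

theorem memSum_iff {U V : Ultrafilter (ℕ → ℕ)} {j k : ℕ} (hU : IsFC j U) (hV : IsFC k V)
    (A : Set (ℕ → ℕ)) : memSum U V A ↔ A ∈ U + V :=
  eventually_pair_congr hU hV fun _ _ _ _ hs => by simp [hs]

theorem map_add_eq {U V : Ultrafilter (ℕ → ℕ)} {j k : ℕ} (hU : IsFC j U) (hV : IsFC k V)
    {f : ℕ → ℕ} (hf : f 0 = 0) :
    (U + V).map (tetrisMap f) = U.map (tetrisMap f) + V.map (tetrisMap f) := by
  ext A
  refine eventually_pair_congr hU hV (P := fun b b' => tetrisMap f (b + b') ∈ A)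
    (Q := fun b b' => tetrisMap f b + tetrisMap f b' ∈ A) fun b _ b' _ hs => ?_
  have : tetrisMap f (b + b') = tetrisMap f b + tetrisMap f b' := by
    funext t
    rcases hs.eq_zero_or t with h | h <;> simp [tetrisMap, h, hf]
  rw [this]

theorem FIN_add {j k : ℕ} {b b' : ℕ → ℕ} (hb : b ∈ FIN j) (hb' : b' ∈ FIN k)
    (hs : SuppLT b b') : b + b' ∈ FIN (max j k) := by
  refine ⟨fun n => ?_, ?_, ?_⟩
  · have h1 := hb.1 n
    have h2 := hb'.1 n
    rcases hs.eq_zero_or n with h | h <;> simp only [Pi.add_apply] <;> omega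
  · refine (hb.2.1.union hb'.2.1).subset fun n hn => ?_
    simp only [Set.mem_ofPred_eq, Pi.add_apply, Set.mem_union] at hn ⊢
    omega
  · rcases le_total j k with h | h
    · obtain ⟨n, hn⟩ := hb'.2.2
      refine ⟨n, ?_⟩
      have h1 := hb.1 n
      rcases hs.eq_zero_or n with h' | h' <;> simp only [Pi.add_apply] <;> omega
    · obtain ⟨n, hn⟩ := hb.2.2
      refine ⟨n, ?_⟩
      have h1 := hb'.1 n
      rcases hs.eq_zero_or n with h' | h' <;> simp only [Pi.add_apply] <;> omega

theorem IsFC.add {U V : Ultrafilter (ℕ → ℕ)} {j k : ℕ} (hU : IsFC j U) (hV : IsFC k V) :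
    IsFC (max j k) (U + V) := by
  refine ⟨?_, fun n => ?_⟩
  · rw [ult_mem_add, eventually_pair_congr hU hV (Q := fun _ _ => True)]
    · simp
    · intro b hb b' hb' hs
      simpa using FIN_add hb hb' hs
  · rw [ult_mem_add]
    filter_upwards [hU.2 n] with b hb
    filter_upwards [hV.2 n] with b' hb'
    have h1 : b n = 0 := hb
    have h2 : b' n = 0 := hb'
    simp [h1, h2]

/-! ### Nondecreasing surjections -/

theorem IsTetrisFn.map_zero {k j : ℕ} {f : ℕ → ℕ} (hf : IsTetrisFn k j f) : f 0 = 0 := by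
  obtain ⟨i, hi, h⟩ := hf.2.2 0 (Nat.zero_le _)
  have := hf.1 i 0 (Nat.zero_le _) hi
  omega

theorem IsTetrisFn.map_top {k j : ℕ} {f : ℕ → ℕ} (hf : IsTetrisFn k j f) : f k = j := by
  obtain ⟨i, hi, h⟩ := hf.2.2 j le_rfl
  have := hf.1 k i hi le_rfl
  have := hf.2.1 k le_rfl
  omega

/-- Restricting `f : {0,…,k+1} → {0,…,j}` to `{0,…,k}` either keeps the image or removes `j`. -/
theorem IsTetrisFn.restrict {k j : ℕ} {f : ℕ → ℕ} (hf : IsTetrisFn (k + 1) j f) :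
    IsTetrisFn k j f ∨ ∃ i, j = i + 1 ∧ IsTetrisFn k i f := by
  have htop := hf.map_top
  have hmono : ∀ i i', i' ≤ i → i ≤ k → f i' ≤ f i := fun i i' h h' => hf.1 i i' h (by omega)
  by_cases hk : f k = j
  · refine Or.inl ⟨hmono, fun i hi => hf.2.1 i (by omega), fun m hm => ?_⟩
    obtain ⟨i, hi, h⟩ := hf.2.2 m hm
    rcases Nat.lt_or_ge k i with h' | h'
    · obtain rfl : i = k + 1 := by omega
      exact ⟨k, le_rfl, by omega⟩
    · exact ⟨i, h', h⟩
  · have hkj : f k < j := lt_of_le_of_ne (hf.2.1 k (by omega)) hk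
    have hsurj : ∀ m, m < j → ∃ i, i ≤ k ∧ f i = m := by
      intro m hm
      obtain ⟨i, hi, h⟩ := hf.2.2 m hm.le
      rcases Nat.lt_or_ge k i with h' | h'
      · obtain rfl : i = k + 1 := by omega
        omega
      · exact ⟨i, h', h⟩
    obtain ⟨i, hi, h⟩ := hsurj (j - 1) (by omega)
    have := hmono k i hi le_rfl
    refine Or.inr ⟨j - 1, by omega, hmono, fun i hi => ?_, fun m hm => hsurj m (by omega)⟩
    have := hmono k i hi le_rfl
    omega

/-! ### Coherent sequences -/

/-- A sequence of cofinite ultrafilters on `FIN k`, `k ≥ 0`, compatible with all nondecreasing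
surjections. The index `0` is included; there `FIN 0 = {0}`. -/
def Coherent (V : ℕ → Ultrafilter (ℕ → ℕ)) : Prop :=
  (∀ k, IsFC k (V k)) ∧ ∀ k j f, IsTetrisFn k j f → (V k).map (tetrisMap f) = V j

theorem Coherent.add {V W : ℕ → Ultrafilter (ℕ → ℕ)} (hV : Coherent V) (hW : Coherent W) :
    Coherent (V + W) := by
  refine ⟨fun k => ?_, fun k j f hf => ?_⟩
  · simpa using (hV.1 k).add (hW.1 k)
  · rw [Pi.add_apply, map_add_eq (hV.1 k) (hW.1 k) hf.map_zero, hV.2 k j f hf, hW.2 k j f hf,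
      Pi.add_apply]

theorem continuous_ult_map (g : (ℕ → ℕ) → ℕ → ℕ) :
    Continuous (fun U : Ultrafilter (ℕ → ℕ) => U.map g) :=
  ultrafilterBasis_is_basis.continuous_iff.2 <| Set.forall_mem_range.mpr fun s =>
    ultrafilter_isOpen_basic (g ⁻¹' s)

theorem isClosed_coherent : IsClosed {V | Coherent V} := by
  have hb : ∀ k (A : Set (ℕ → ℕ)), IsClosed {V : ℕ → Ultrafilter (ℕ → ℕ) | A ∈ V k} :=
    fun k A => IsClosed.preimage (t := {U : Ultrafilter (ℕ → ℕ) | A ∈ U})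
      (continuous_apply (A := fun _ : ℕ => Ultrafilter (ℕ → ℕ)) k) (ultrafilter_isClosed_basic A)
  simp only [Coherent, IsFC, IsCofinite, Set.ofPred_and, Set.ofPred_forall]
  refine IsClosed.inter (isClosed_iInter fun k => (hb k _).inter (isClosed_iInter fun n => hb k _))
    (isClosed_iInter fun k => isClosed_iInter fun j => isClosed_iInter fun f =>
      isClosed_iInter fun _ => ?_)
  exact isClosed_eq ((continuous_ult_map _).comp (continuous_apply k)) (continuous_apply j)

theorem exists_idempotent_mem {C : Set (ℕ → Ultrafilter (ℕ → ℕ))} (hne : C.Nonempty)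
    (hcl : IsClosed C) (hadd : ∀ V ∈ C, ∀ W ∈ C, V + W ∈ C) : ∃ V ∈ C, V + V = V :=
  exists_idempotent_in_compact_add_subsemigroup (M := ℕ → Ultrafilter (ℕ → ℕ))
    (fun r => continuous_pi fun k =>
      (Ultrafilter.continuous_add_left (r k)).comp (continuous_apply k))
    C hne hcl.isCompact hadd

/-! ### Existence of coherent sequences -/

/-- The indicator function of `[x, ∞)`. -/
def stepFn (x : ℕ) : ℕ → ℕ := fun t => if x ≤ t then 1 else 0

/-- The distribution of an unbounded staircase of height `k`, i.e. of `∑ i, stepFn (x i)` for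
`p`-generic `x₁ < … < x_k`, with `p` the nonprincipal ultrafilter `hyperfilter ℕ`. -/
noncomputable def stairUlt : ℕ → Ultrafilter (ℕ → ℕ)
  | 0 => pure 0
  | k + 1 => stairUlt k + (hyperfilter ℕ).map stepFn

/-- The restriction of `s` to `[0, x)`, extended by `0`. -/
def cutFn (s : ℕ → ℕ) (x : ℕ) : ℕ → ℕ := fun t => if t < x then s t else 0

/-- The distribution of a staircase of height `k` cut off at a further `p`-generic point. -/
noncomputable def cutUlt (k : ℕ) : Ultrafilter (ℕ → ℕ) :=
  (stairUlt k).bind fun s => (hyperfilter ℕ).map (cutFn s)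

theorem eventually_hyper_gt (N : ℕ) : ∀ᶠ x in (hyperfilter ℕ : Filter ℕ), N < x :=
  Nat.hyperfilter_le_atTop (eventually_gt_atTop N)

theorem mem_stairUlt_succ {k : ℕ} {A : Set (ℕ → ℕ)} :
    A ∈ stairUlt (k + 1) ↔ ∀ᶠ s in (stairUlt k : Filter (ℕ → ℕ)),
      ∀ᶠ x in (hyperfilter ℕ : Filter ℕ), s + stepFn x ∈ A :=
  Iff.rfl

theorem mem_cutUlt {k : ℕ} {A : Set (ℕ → ℕ)} :
    A ∈ cutUlt k ↔ ∀ᶠ s in (stairUlt k : Filter (ℕ → ℕ)),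
      ∀ᶠ x in (hyperfilter ℕ : Filter ℕ), cutFn s x ∈ A :=
  Iff.rfl

theorem eventually_stairUlt (k : ℕ) : ∀ᶠ s in (stairUlt k : Filter (ℕ → ℕ)),
    (∀ t, s t ≤ k) ∧ ∃ N, ∀ t, N ≤ t → s t = k := by
  induction k with
  | zero =>
    change {s : ℕ → ℕ | (∀ t, s t ≤ 0) ∧ ∃ N, ∀ t, N ≤ t → s t = 0} ∈ stairUlt 0
    simp [stairUlt]
  | succ k ih =>
    refine mem_stairUlt_succ.2 ?_
    filter_upwards [ih] with s hs
    refine Eventually.of_forall fun x => ?_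
    obtain ⟨h1, N, h2⟩ := hs
    refine ⟨fun t => ?_, max N x, fun t ht => ?_⟩
    · have := h1 t
      simp only [Pi.add_apply, stepFn]
      split_ifs <;> omega
    · have := h2 t (by omega)
      simp only [Pi.add_apply, stepFn]
      rw [if_pos (by omega)]
      omega

theorem isCofinite_stairUlt (k : ℕ) : IsCofinite (stairUlt k) := by
  intro n
  induction k with
  | zero => simp [stairUlt]
  | succ k ih =>
    refine mem_stairUlt_succ.2 ?_
    filter_upwards [ih] with s hs
    filter_upwards [eventually_hyper_gt n] with x hx
    have hs' : s n = 0 := hs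
    simp [stepFn, hs', hx]

/-- Composing with `f` deletes from a staircase those steps `i` with `f i = f (i - 1)`. -/
theorem map_stairUlt {k j : ℕ} {f : ℕ → ℕ} (hf : IsTetrisFn k j f) :
    (stairUlt k).map (tetrisMap f) = stairUlt j := by
  induction k generalizing j with
  | zero =>
    have h0 := hf.map_zero
    obtain rfl : j = 0 := by rw [← hf.map_top, h0]
    have : tetrisMap f 0 = 0 := by funext t; simp [tetrisMap, h0]
    simp [stairUlt, this]
  | succ k ih =>
    have htop := hf.map_top
    rcases hf.restrict with hr | ⟨i, rfl, hr⟩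
    · rw [← ih hr]
      ext A
      rw [Ultrafilter.mem_map, Ultrafilter.mem_map, mem_stairUlt_succ]
      refine eventually_congr ?_
      filter_upwards [eventually_stairUlt k] with s hs
      obtain ⟨h1, N, h2⟩ := hs
      -- for `x > N` the extra step only turns values `k` into `k + 1`, and `f (k + 1) = f k`
      have key : ∀ᶠ x in (hyperfilter ℕ : Filter ℕ),
          tetrisMap f (s + stepFn x) = tetrisMap f s := by
        filter_upwards [eventually_hyper_gt N] with x hx
        funext t
        simp only [tetrisMap, Function.comp, Pi.add_apply, stepFn]
        split_ifs with h
        · rw [h2 t (by omega), htop, hr.map_top]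
        · simp
      constructor
      · intro h
        obtain ⟨x, hx, hx'⟩ := (h.and key).exists
        have : tetrisMap f (s + stepFn x) ∈ A := hx
        rwa [hx'] at this
      · intro h
        filter_upwards [key] with x hx
        change tetrisMap f (s + stepFn x) ∈ A
        rw [hx]
        exact h
    · ext A
      rw [Ultrafilter.mem_map, mem_stairUlt_succ, mem_stairUlt_succ, ← ih hr]
      change _ ↔ ∀ᶠ s in (stairUlt k : Filter (ℕ → ℕ)),
        ∀ᶠ x in (hyperfilter ℕ : Filter ℕ), tetrisMap f s + stepFn x ∈ A
      refine eventually_congr ?_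
      filter_upwards [eventually_stairUlt k] with s hs
      obtain ⟨h1, N, h2⟩ := hs
      refine eventually_congr ?_
      filter_upwards [eventually_hyper_gt N] with x hx
      have : tetrisMap f (s + stepFn x) = tetrisMap f s + stepFn x := by
        funext t
        simp only [tetrisMap, Function.comp, Pi.add_apply, stepFn]
        split_ifs with h
        · rw [h2 t (by omega), htop, hr.map_top]
        · simp
      rw [Set.mem_preimage, this]

theorem exists_coherent : ∃ V, Coherent V := by
  refine ⟨cutUlt, fun k => ⟨?_, fun n => ?_⟩, fun k j f hf => ?_⟩
  · rw [mem_cutUlt]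
    filter_upwards [eventually_stairUlt k] with s hs
    obtain ⟨h1, N, h2⟩ := hs
    filter_upwards [eventually_hyper_gt N] with x hx
    refine ⟨fun t => ?_, (Set.finite_Iio x).subset fun t ht => ?_, N, ?_⟩
    · have := h1 t
      simp only [cutFn]
      split_ifs <;> omega
    · by_contra hc
      exact ht (if_neg hc)
    · simp [cutFn, hx, h2 N le_rfl]
  · rw [mem_cutUlt]
    filter_upwards [isCofinite_stairUlt k n] with s hs
    refine Eventually.of_forall fun x => ?_
    have hs' : s n = 0 := hs
    simp [cutFn, hs']
  · ext A
    rw [Ultrafilter.mem_map, mem_cutUlt, mem_cutUlt, ← map_stairUlt hf]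
    change _ ↔ ∀ᶠ s in (stairUlt k : Filter (ℕ → ℕ)),
        ∀ᶠ x in (hyperfilter ℕ : Filter ℕ), cutFn (tetrisMap f s) x ∈ A
    have : ∀ s x, tetrisMap f (cutFn s x) = cutFn (tetrisMap f s) x := by
      intro s x
      funext t
      simp only [tetrisMap, Function.comp, cutFn]
      split_ifs
      · rfl
      · exact hf.map_zero
    simp only [Set.mem_preimage, this]

/-! ### Left and right partial sums -/

/-- `V 0 + V 1 + ⋯ + V k`. -/
def leftSum (V : ℕ → Ultrafilter (ℕ → ℕ)) : ℕ → Ultrafilter (ℕ → ℕ)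
  | 0 => V 0
  | k + 1 => leftSum V k + V (k + 1)

/-- `V k + ⋯ + V 1 + V 0`. -/
def rightSum (V : ℕ → Ultrafilter (ℕ → ℕ)) : ℕ → Ultrafilter (ℕ → ℕ)
  | 0 => V 0
  | k + 1 => V (k + 1) + rightSum V k

theorem coherent_leftSum {V : ℕ → Ultrafilter (ℕ → ℕ)} (hV : Coherent V)
    (hid : ∀ k, V k + V k = V k) : Coherent (leftSum V) := by
  have hFC : ∀ k, IsFC k (leftSum V k) := by
    intro k
    induction k with
    | zero => exact hV.1 0
    | succ k ih => simpa [leftSum] using ih.add (hV.1 (k + 1))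
  have habs : ∀ k, leftSum V k + V k = leftSum V k := by
    intro k
    cases k with
    | zero => exact hid 0
    | succ k => rw [leftSum, add_assoc, hid]
  refine ⟨hFC, fun k => ?_⟩
  induction k with
  | zero =>
    intro j f hf
    obtain rfl : j = 0 := by rw [← hf.map_top, hf.map_zero]
    exact hV.2 0 0 f hf
  | succ k ih =>
    intro j f hf
    rw [leftSum, map_add_eq (hFC k) (hV.1 (k + 1)) hf.map_zero, hV.2 _ _ f hf]
    rcases hf.restrict with hr | ⟨i, rfl, hr⟩
    · rw [ih j f hr, habs]
    · rw [ih i f hr, leftSum]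

theorem coherent_rightSum {V : ℕ → Ultrafilter (ℕ → ℕ)} (hV : Coherent V)
    (hid : ∀ k, V k + V k = V k) : Coherent (rightSum V) := by
  have hFC : ∀ k, IsFC k (rightSum V k) := by
    intro k
    induction k with
    | zero => exact hV.1 0
    | succ k ih => simpa [rightSum] using (hV.1 (k + 1)).add ih
  have habs : ∀ k, V k + rightSum V k = rightSum V k := by
    intro k
    cases k with
    | zero => exact hid 0
    | succ k => rw [rightSum, ← add_assoc, hid]
  refine ⟨hFC, fun k => ?_⟩
  induction k with
  | zero =>
    intro j f hf
    obtain rfl : j = 0 := by rw [← hf.map_top, hf.map_zero]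
    exact hV.2 0 0 f hf
  | succ k ih =>
    intro j f hf
    rw [rightSum, map_add_eq (hV.1 (k + 1)) (hFC k) hf.map_zero, hV.2 _ _ f hf]
    rcases hf.restrict with hr | ⟨i, rfl, hr⟩
    · rw [ih j f hr, habs]
    · rw [ih i f hr, rightSum]

/-! ### Absorption -/

/-- A coherent sequence satisfying the absorption identities up to level `n`. -/
def Good (n : ℕ) (V : ℕ → Ultrafilter (ℕ → ℕ)) : Prop :=
  Coherent V ∧ ∀ k ≤ n, ∀ j ≤ k, V k + V j = V k ∧ V j + V k = V k

theorem exists_good_zero : ∃ V, Good 0 V := by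
  obtain ⟨V, hV, hid⟩ := exists_idempotent_mem (C := {V | Coherent V}) exists_coherent
    isClosed_coherent fun V hV W hW => Coherent.add hV hW
  refine ⟨V, hV, fun k hk j hj => ?_⟩
  obtain rfl : k = 0 := by omega
  obtain rfl : j = 0 := by omega
  exact ⟨congrFun hid 0, congrFun hid 0⟩

theorem sums_eq_of_agree {n : ℕ} {V W : ℕ → Ultrafilter (ℕ → ℕ)} (hV : Good n V)
    (hW : ∀ i ≤ n, W i = V i) : ∀ i ≤ n, leftSum W i = V i ∧ rightSum W i = V i := by
  intro i
  induction i with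
  | zero => exact fun h => ⟨hW 0 h, hW 0 h⟩
  | succ i ih =>
    intro hi
    obtain ⟨h1, h2⟩ := ih (by omega)
    obtain ⟨h3, h4⟩ := hV.2 (i + 1) hi i (by omega)
    rw [leftSum, rightSum, h1, h2, hW _ hi]
    exact ⟨h4, h3⟩

theorem good_step {n : ℕ} {V : ℕ → Ultrafilter (ℕ → ℕ)} (hV : Good n V) :
    ∃ W, Good (n + 1) W ∧ ∀ i ≤ n, W i = V i := by
  have hidV : ∀ i ≤ n, V i + V i = V i := fun i hi => (hV.2 i hi i le_rfl).1
  let C : Set (ℕ → Ultrafilter (ℕ → ℕ)) := {W | Coherent W} ∩ {W | ∀ i ≤ n, W i = V i}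
  have hCcl : IsClosed C := by
    refine isClosed_coherent.inter ?_
    simp only [Set.ofPred_forall]
    exact isClosed_iInter fun i => isClosed_iInter fun _ =>
      isClosed_eq (continuous_apply i) continuous_const
  have hCadd : ∀ W ∈ C, ∀ W' ∈ C, W + W' ∈ C := by
    rintro W ⟨hW, hWV⟩ W' ⟨hW', hWV'⟩
    refine ⟨Coherent.add hW hW', fun i hi => ?_⟩
    rw [Pi.add_apply, hWV i hi, hWV' i hi, hidV i hi]
  obtain ⟨W₁, ⟨hW₁, hW₁V⟩, hid₁⟩ := exists_idempotent_mem (C := C)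
    ⟨V, hV.1, fun _ _ => rfl⟩ hCcl hCadd
  let D : Set (ℕ → Ultrafilter (ℕ → ℕ)) := C ∩ {W | W (n + 1) + V n = W (n + 1)}
  have hDne : D.Nonempty := by
    refine ⟨rightSum W₁, ⟨coherent_rightSum hW₁ (congrFun hid₁),
      fun i hi => (sums_eq_of_agree hV hW₁V i hi).2⟩, ?_⟩
    change rightSum W₁ (n + 1) + V n = rightSum W₁ (n + 1)
    rw [rightSum, (sums_eq_of_agree hV hW₁V n le_rfl).2, add_assoc, hidV n le_rfl]
  have hDcl : IsClosed D :=
    hCcl.inter (isClosed_eq ((Ultrafilter.continuous_add_left (V n)).comp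
      (continuous_apply (n + 1))) (continuous_apply (n + 1)))
  have hDadd : ∀ W ∈ D, ∀ W' ∈ D, W + W' ∈ D := by
    rintro W ⟨hW, _⟩ W' ⟨hW', h'⟩
    refine ⟨hCadd W hW W' hW', ?_⟩
    change W (n + 1) + W' (n + 1) + V n = W (n + 1) + W' (n + 1)
    rw [add_assoc, show W' (n + 1) + V n = W' (n + 1) from h']
  obtain ⟨W, ⟨⟨hW, hWV⟩, hWn⟩, hid⟩ := exists_idempotent_mem hDne hDcl hDadd
  have hWn' : W (n + 1) + V n = W (n + 1) := hWn
  have hid' : W (n + 1) + W (n + 1) = W (n + 1) := congrFun hid (n + 1)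
  have hL : ∀ i ≤ n, leftSum W i = V i := fun i hi => (sums_eq_of_agree hV hWV i hi).1
  have hLn : leftSum W (n + 1) = V n + W (n + 1) := by rw [leftSum, hL n le_rfl]
  refine ⟨leftSum W, ⟨coherent_leftSum hW (congrFun hid), fun k hk j hj => ?_⟩, hL⟩
  rcases Nat.lt_or_ge n k with h | h
  · obtain rfl : k = n + 1 := by omega
    rcases Nat.lt_or_ge n j with h' | h'
    · obtain rfl : j = n + 1 := by omega
      have : V n + W (n + 1) + (V n + W (n + 1)) = V n + W (n + 1) := by
        rw [add_assoc, ← add_assoc (W (n + 1)), hWn', hid']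
      rw [hLn]
      exact ⟨this, this⟩
    · obtain ⟨h1, h2⟩ := hV.2 n le_rfl j h'
      rw [hLn, hL j h']
      constructor
      · rw [← hWn', ← add_assoc, add_assoc _ (V n) (V j), h1]
      · rw [← add_assoc, h2]
  · rw [hL k h, hL j (by omega)]
    exact hV.2 k h j hj

/-- There is a sequence `(U_k)` of cofinite ultrafilters on `FIN k` such that for any
`0 < j ≤ k` and any nondecreasing surjection `f : {0,…,k} → {0,…,j}`,
`U_k + U_j = U_j + U_k = U_k` and `f(U_k) = U_j`. -/
theorem exists_coherent_ultrafilters :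
    ∃ U : ℕ → Ultrafilter (ℕ → ℕ),
      (∀ k, 1 ≤ k → FIN k ∈ U k ∧ IsCofinite (U k)) ∧
      ∀ j k, 0 < j → j ≤ k →
        (∀ A : Set (ℕ → ℕ), memSum (U k) (U j) A ↔ A ∈ U k) ∧
        (∀ A : Set (ℕ → ℕ), memSum (U j) (U k) A ↔ A ∈ U k) ∧
        ∀ f : ℕ → ℕ, IsTetrisFn k j f → (U k).map (tetrisMap f) = U j := by
  obtain ⟨V₀, hV₀⟩ := exists_good_zero
  choose! next hnext hagree using fun n V (hV : Good n V) => good_step hV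
  let S : ℕ → ℕ → Ultrafilter (ℕ → ℕ) := fun n => Nat.rec V₀ (fun n V => next n V) n
  have hS : ∀ n, Good n (S n) := by
    intro n
    induction n with
    | zero => exact hV₀
    | succ n ih => exact hnext n (S n) ih
  have hstab : ∀ j k, j ≤ k → S k j = S j j := by
    intro j k hjk
    induction k, hjk using Nat.le_induction with
    | base => rfl
    | succ k hk ih => exact (hagree k (S k) (hS k) j hk).trans ih
  have hFC : ∀ k, IsFC k (S k k) := fun k => (hS k).1.1 k
  refine ⟨fun k => S k k, fun k _ => hFC k, fun j k _ hjk => ?_⟩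
  obtain ⟨h1, h2⟩ := (hS k).2 k le_rfl j hjk
  rw [hstab j k hjk] at h1 h2
  refine ⟨fun A => ?_, fun A => ?_, fun f hf => ?_⟩
  · rw [memSum_iff (hFC k) (hFC j), h1]
  · rw [memSum_iff (hFC j) (hFC k), h2]
  · exact ((hS k).1.2 k j f hf).trans (hstab j k hjk)
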